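/- The image of Ω_A under ♮ equals (1⊗Λ + a(a+1)⊗1 − b(b+1)⊗1 − c(c+1)⊗1)·(a(a+1)⊗Λ − b(b+1)c(c+1)⊗1) − (1⊗Λ + a(a+1)⊗1)·(b(b+1)⊗1 + c(c+1)⊗1); the image of Ω_B under ♮ equals (1⊗Λ + b(b+1)⊗1 − c(c+1)⊗1 − a(a+1)⊗1)·(b(b+1)⊗Λ − c(c+1)a(a+1)⊗1) − (1⊗Λ + b(b+1)⊗1)·(c(c+1)⊗1 + a(a+1)⊗1); and the image of Ω_C under ♮ equals (1⊗Λ + c(c+1)⊗1 − a(a+1)⊗1 − b(b+1)⊗1)·(c(c+1)⊗Λ − a(a+1)b(b+1)⊗1) − (1⊗Λ + c(c+1)⊗1)·(a(a+1)⊗1 + b(b+1)⊗1). -/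

import Mathlib

open scoped TensorProduct

noncomputable section

namespace RacahPaper

variable (F : Type) [Field F]

/-- Defining relations of `U(sl₂)`: generators `e = ι 0`, `f = ι 1`, `h = ι 2` with
`he - eh = 2e`, `hf - fh = -2f`, `ef - fe = h`. -/
inductive slRel : FreeAlgebra F (Fin 3) → FreeAlgebra F (Fin 3) → Prop
  | he : slRel (FreeAlgebra.ι F 2 * FreeAlgebra.ι F 0 - FreeAlgebra.ι F 0 * FreeAlgebra.ι F 2)
      (2 * FreeAlgebra.ι F 0)
  | hf : slRel (FreeAlgebra.ι F 2 * FreeAlgebra.ι F 1 - FreeAlgebra.ι F 1 * FreeAlgebra.ι F 2)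
      (-(2 * FreeAlgebra.ι F 1))
  | ef : slRel (FreeAlgebra.ι F 0 * FreeAlgebra.ι F 1 - FreeAlgebra.ι F 1 * FreeAlgebra.ι F 0)
      (FreeAlgebra.ι F 2)

/-- The universal enveloping algebra `U(sl₂)`. -/
abbrev U := RingQuot (slRel F)

/-- The generator `e` of `U(sl₂)`. -/
def e : U F := RingQuot.mkAlgHom F (slRel F) (FreeAlgebra.ι F 0)

/-- The generator `f` of `U(sl₂)`. -/
def f : U F := RingQuot.mkAlgHom F (slRel F) (FreeAlgebra.ι F 1)

/-- The generator `h` of `U(sl₂)`. -/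
def h : U F := RingQuot.mkAlgHom F (slRel F) (FreeAlgebra.ι F 2)

/-- The equitable generator `x = -f - h/2`. -/
def ux : U F := -f F - (2 : F)⁻¹ • h F

/-- The equitable generator `y = h/2`. -/
def uy : U F := (2 : F)⁻¹ • h F

/-- The equitable generator `z = e - h/2`. -/
def uz : U F := e F - (2 : F)⁻¹ • h F

/-- The normalized Casimir element `Λ = ef + h(h-2)/4` of `U(sl₂)`. -/
def Lam : U F := e F * f F + (4 : F)⁻¹ • (h F * (h F - 2))

/-- `ν_x = f/2`. -/
def nux : U F := (2 : F)⁻¹ • f F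

/-- `ν_z = e/2`. -/
def nuz : U F := (2 : F)⁻¹ • e F

/-- `U_n`: the span of the `e^i h^j f^k` with `k - i = n`. -/
def Usub (n : ℤ) : Submodule F (U F) :=
  Submodule.span F {u : U F | ∃ i j k : ℕ, (k : ℤ) - (i : ℤ) = n ∧ u = e F ^ i * h F ^ j * f F ^ k}

-- Racah algebra
/-- Generator `A` of the free algebra. -/
def fA : FreeAlgebra F (Fin 4) := FreeAlgebra.ι F 0
/-- Generator `B` of the free algebra. -/
def fB : FreeAlgebra F (Fin 4) := FreeAlgebra.ι F 1
/-- Generator `C` of the free algebra. -/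
def fC : FreeAlgebra F (Fin 4) := FreeAlgebra.ι F 2
/-- Generator `D` of the free algebra. -/
def fD : FreeAlgebra F (Fin 4) := FreeAlgebra.ι F 3

/-- `α = [A,D] + AC - BA` in the free algebra. -/
def falpha : FreeAlgebra F (Fin 4) := (fA F * fD F - fD F * fA F) + fA F * fC F - fB F * fA F
/-- `β = [B,D] + BA - CB` in the free algebra. -/
def fbeta : FreeAlgebra F (Fin 4) := (fB F * fD F - fD F * fB F) + fB F * fA F - fC F * fB F
/-- `γ = [C,D] + CB - AC` in the free algebra. -/
def fgamma : FreeAlgebra F (Fin 4) := (fC F * fD F - fD F * fC F) + fC F * fB F - fA F * fC F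

/-- Defining relations of the Racah algebra: `[A,B] = [B,C] = [C,A] = 2D` and each of
`α, β, γ` commutes with each of the generators `A, B, C, D`. -/
inductive racahRel : FreeAlgebra F (Fin 4) → FreeAlgebra F (Fin 4) → Prop
  | AB : racahRel (fA F * fB F - fB F * fA F) (2 * fD F)
  | BC : racahRel (fB F * fC F - fC F * fB F) (2 * fD F)
  | CA : racahRel (fC F * fA F - fA F * fC F) (2 * fD F)
  | calpha (i : Fin 4) : racahRel (falpha F * FreeAlgebra.ι F i) (FreeAlgebra.ι F i * falpha F)
  | cbeta (i : Fin 4) : racahRel (fbeta F * FreeAlgebra.ι F i) (FreeAlgebra.ι F i * fbeta F)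
  | cgamma (i : Fin 4) : racahRel (fgamma F * FreeAlgebra.ι F i) (FreeAlgebra.ι F i * fgamma F)

/-- The Racah algebra `ℜ`. -/
abbrev Racah := RingQuot (racahRel F)

/-- Generator `A` of the Racah algebra. -/
def A : Racah F := RingQuot.mkAlgHom F (racahRel F) (fA F)
/-- Generator `B` of the Racah algebra. -/
def B : Racah F := RingQuot.mkAlgHom F (racahRel F) (fB F)
/-- Generator `C` of the Racah algebra. -/
def C : Racah F := RingQuot.mkAlgHom F (racahRel F) (fC F)
/-- Generator `D` of the Racah algebra. -/
def D : Racah F := RingQuot.mkAlgHom F (racahRel F) (fD F)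

/-- `α = [A,D] + AC - BA` in the Racah algebra. -/
def alpha : Racah F := (A F * D F - D F * A F) + A F * C F - B F * A F
/-- `β = [B,D] + BA - CB` in the Racah algebra. -/
def beta : Racah F := (B F * D F - D F * B F) + B F * A F - C F * B F
/-- `γ = [C,D] + CB - AC` in the Racah algebra. -/
def gamma : Racah F := (C F * D F - D F * C F) + C F * B F - A F * C F
/-- `δ = A + B + C` in the Racah algebra. -/
def delta : Racah F := A F + B F + C F

/-- `Ω_A = D² + (BAC + CAB)/2 + A² + Bγ - Cβ - Aδ`. -/
def OmegaA : Racah F :=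
  D F ^ 2 + (2 : F)⁻¹ • (B F * A F * C F + C F * A F * B F) + A F ^ 2
    + B F * gamma F - C F * beta F - A F * delta F

/-- `Ω_B = D² + (CBA + ABC)/2 + B² + Cα - Aγ - Bδ`. -/
def OmegaB : Racah F :=
  D F ^ 2 + (2 : F)⁻¹ • (C F * B F * A F + A F * B F * C F) + B F ^ 2
    + C F * alpha F - A F * gamma F - B F * delta F

/-- `Ω_C = D² + (ACB + BCA)/2 + C² + Aβ - Bα - Cδ`. -/
def OmegaC : Racah F :=
  D F ^ 2 + (2 : F)⁻¹ • (A F * C F * B F + B F * C F * A F) + C F ^ 2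
    + A F * beta F - B F * alpha F - C F * delta F

-- the tensor algebra F[a,b,c] ⊗ U(sl2)
/-- The polynomial algebra `F[a,b,c]`. -/
abbrev P := MvPolynomial (Fin 3) F

/-- The tensor product algebra `F[a,b,c] ⊗ U(sl₂)`. -/
abbrev T := P F ⊗[F] U F

/-- The indeterminate `a`. -/
def pa : P F := MvPolynomial.X 0
/-- The indeterminate `b`. -/
def pb : P F := MvPolynomial.X 1
/-- The indeterminate `c`. -/
def pc : P F := MvPolynomial.X 2

/-- `A♮`. -/
def Anat : T F :=
  (pa F * (pa F + 1)) ⊗ₜ[F] (1 : U F) + (pb F - pc F - pa F) ⊗ₜ[F] ux F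
    + (pa F + pb F - pc F + 1) ⊗ₜ[F] uy F - (1 : P F) ⊗ₜ[F] (ux F * uy F)

/-- `B♮`. -/
def Bnat : T F :=
  (pb F * (pb F + 1)) ⊗ₜ[F] (1 : U F) + (pc F - pa F - pb F) ⊗ₜ[F] uy F
    + (pb F + pc F - pa F + 1) ⊗ₜ[F] uz F - (1 : P F) ⊗ₜ[F] (uy F * uz F)

/-- `C♮`. -/
def Cnat : T F :=
  (pc F * (pc F + 1)) ⊗ₜ[F] (1 : U F) + (pa F - pb F - pc F) ⊗ₜ[F] uz F
    + (pc F + pa F - pb F + 1) ⊗ₜ[F] ux F - (1 : P F) ⊗ₜ[F] (uz F * ux F)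

/-- `D♮`. -/
def Dnat : T F :=
  (1 : P F) ⊗ₜ[F] (uz F * uy F * ux F + uz F * ux F)
    + (pc F + pb F * (pc F + pa F - pb F)) ⊗ₜ[F] ux F
    + (pa F + pc F * (pa F + pb F - pc F)) ⊗ₜ[F] uy F
    + (pb F + pa F * (pb F + pc F - pa F)) ⊗ₜ[F] uz F
    + (pb F - pc F) ⊗ₜ[F] (ux F * uy F)
    + (pc F - pa F) ⊗ₜ[F] (uy F * uz F)
    + (pa F - pb F) ⊗ₜ[F] (uz F * ux F)

/-- `R = 2 ⊗ yν_x + 2(c+a-b+1) ⊗ ν_x`. -/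
def Rel : T F :=
  (2 : P F) ⊗ₜ[F] (uy F * nux F) + (2 * (pc F + pa F - pb F + 1)) ⊗ₜ[F] nux F

/-- `L = -2 ⊗ yν_z - 2(a-b-c-1) ⊗ ν_z`. -/
def Lel : T F :=
  -((2 : P F) ⊗ₜ[F] (uy F * nuz F)) - (2 * (pa F - pb F - pc F - 1)) ⊗ₜ[F] nuz F

/-- `θ = 1⊗y - b⊗1`. -/
def theta : T F := (1 : P F) ⊗ₜ[F] uy F - pb F ⊗ₜ[F] (1 : U F)

/-- `ϑ = 1⊗y + a⊗1`. -/
def vartheta : T F := (1 : P F) ⊗ₜ[F] uy F + pa F ⊗ₜ[F] (1 : U F)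

/-- `F[a,b,c] ⊗ U_n` as a subspace of `F[a,b,c] ⊗ U(sl₂)`. -/
def TU (n : ℤ) : Submodule F (T F) :=
  Submodule.span F {t : T F | ∃ (p : P F) (u : U F), u ∈ Usub F n ∧ t = p ⊗ₜ[F] u}


/-!
Rotating `x, y, z` together with `a, b, c` permutes `A♮, B♮, C♮` cyclically and fixes `D♮`, so it
suffices to treat `Ω_A`, with `β` and `γ` obtained from `α` by rotation. Over the centre, which
contains `a`, `b`, `c` and `Λ`, grade `U(sl₂)` by giving `y = h/2` degree zero. The equitable
relations say that `-(x + y) = f` raises and `y + z = e` lowers `y` by one, their products being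
`Λ - y² ± y`. Hence `A♮ = ϑ(ϑ + 1) + r` and `B♮ = θ(θ - 1) + l`, where `ϑ = y + a`, `θ = y - b`,
and `r`, `l` are multiples of `f`, `e` by polynomials in `y`, so that `rl` and `lr` are polynomials
in `y` with central coefficients. Once `C♮ = δ - A♮ - B♮` and `D♮` are written in this form too,
both `α` and `Ω_A` are computed degree by degree by identities of commutative polynomials in `y`.
-/

section Ladder

open Polynomial

variable {S R : Type*} [CommRing S] [Ring R] [Algebra S R]

/-- The elements `r` and `l` of the `S`-algebra `R` raise and lower `y` by one, and their products
are polynomials in `y`: these are the relations of a generalized Weyl algebra over `S[X]` with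
weight `w` and automorphism `X ↦ X + 1`. -/
structure IsLadder (y r l : R) (w : S[X]) : Prop where
  raise_mul : r * y = (y + 1) * r
  lower_mul : l * y = (y - 1) * l
  raise_mul_lower : r * l = aeval y w
  lower_mul_raise : l * r = aeval y (w.comp (X - 1))

/-- The general element of degree between `-2` and `2` generated by a ladder `y, r, l`, where `r`
has degree `1` and `l` degree `-1`; coefficients are polynomials in `y`, listed from degree `2`
down to degree `-2` and written on the left. -/
def ladderSum (y r l : R) (p₂ p₁ p₀ q₁ q₂ : S[X]) : R :=
  aeval y p₂ * (r * r) + aeval y p₁ * r + aeval y p₀ + aeval y q₁ * l + aeval y q₂ * (l * l)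

theorem mul_aeval_eq_aeval_comp_mul {y w : R} {k : S[X]} (hw : w * y = aeval y k * w)
    (p : S[X]) : w * aeval y p = aeval y (p.comp k) * w := by
  have hsemi : SemiconjBy w (aeval y p) (aeval (aeval y k) p) := by
    induction p using Polynomial.induction_on' with
    | add p q hp hq => simpa only [map_add] using hp.add_right hq
    | monomial n s =>
      simpa only [aeval_monomial] using
        SemiconjBy.mul_right (Algebra.commute_algebraMap_right s w) (SemiconjBy.pow_right hw n)
  simpa only [aeval_comp] using hsemi.eq

variable {y r l : R} {w : S[X]}

theorem IsLadder.raise_mul_aeval (h : IsLadder y r l w) (p : S[X]) :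
    r * aeval y p = aeval y (p.comp (X + 1)) * r :=
  mul_aeval_eq_aeval_comp_mul (by simpa using h.raise_mul) p

theorem IsLadder.lower_mul_aeval (h : IsLadder y r l w) (p : S[X]) :
    l * aeval y p = aeval y (p.comp (X - 1)) * l :=
  mul_aeval_eq_aeval_comp_mul (by simpa using h.lower_mul) p

theorem ladderSum_add (p₂ p₁ p₀ q₁ q₂ p₂' p₁' p₀' q₁' q₂' : S[X]) :
    ladderSum y r l p₂ p₁ p₀ q₁ q₂ + ladderSum y r l p₂' p₁' p₀' q₁' q₂' =
      ladderSum y r l (p₂ + p₂') (p₁ + p₁') (p₀ + p₀') (q₁ + q₁') (q₂ + q₂') := by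
  simp only [ladderSum, map_add, add_mul]
  abel

theorem ladderSum_sub (p₂ p₁ p₀ q₁ q₂ p₂' p₁' p₀' q₁' q₂' : S[X]) :
    ladderSum y r l p₂ p₁ p₀ q₁ q₂ - ladderSum y r l p₂' p₁' p₀' q₁' q₂' =
      ladderSum y r l (p₂ - p₂') (p₁ - p₁') (p₀ - p₀') (q₁ - q₁') (q₂ - q₂') := by
  simp only [ladderSum, map_sub, sub_mul]
  abel

theorem algebraMap_eq_ladderSum (y r l : R) (s : S) :
    algebraMap S R s = ladderSum y r l 0 0 (Polynomial.C s) 0 0 := by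
  simp [ladderSum]

namespace IsLadder

theorem ladderSum_mul (h : IsLadder y r l w) (p q s p' q' s' : S[X]) :
    ladderSum y r l 0 p q s 0 * ladderSum y r l 0 p' q' s' 0 =
      ladderSum y r l (p * p'.comp (X + 1)) (p * q'.comp (X + 1) + q * p')
        (p * s'.comp (X + 1) * w + q * q' + s * p'.comp (X - 1) * w.comp (X - 1))
        (q * s' + s * q'.comp (X - 1)) (s * s'.comp (X - 1)) := by
  have raise_mul_assoc (p : S[X]) (t : R) :
      r * (aeval y p * t) = aeval y (p.comp (X + 1)) * (r * t) := by
    rw [← mul_assoc, h.raise_mul_aeval, mul_assoc]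
  have lower_mul_assoc (p : S[X]) (t : R) :
      l * (aeval y p * t) = aeval y (p.comp (X - 1)) * (l * t) := by
    rw [← mul_assoc, h.lower_mul_aeval, mul_assoc]
  simp only [ladderSum, map_zero, zero_mul, zero_add, add_zero, mul_add, add_mul, mul_assoc,
    raise_mul_assoc, lower_mul_assoc, h.raise_mul_aeval, h.lower_mul_aeval, h.raise_mul_lower,
    h.lower_mul_raise, map_add, map_mul]
  abel

theorem raise_add_mul_lower_add (h : IsLadder y r l w) (u v : S[X]) :
    ladderSum y r l 0 1 u 0 0 * ladderSum y r l 0 0 v 1 0 =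
      ladderSum y r l 0 (v.comp (X + 1)) (w + u * v) u 0 := by
  rw [h.ladderSum_mul]
  simp only [zero_comp, one_comp, mul_zero, zero_mul, mul_one, one_mul, add_zero]

theorem lower_add_mul_raise_add (h : IsLadder y r l w) (u v : S[X]) :
    ladderSum y r l 0 0 v 1 0 * ladderSum y r l 0 1 u 0 0 =
      ladderSum y r l 0 v (w.comp (X - 1) + v * u) (u.comp (X - 1)) 0 := by
  rw [h.ladderSum_mul]
  simp only [zero_comp, one_comp, mul_zero, zero_mul, mul_one, one_mul, add_zero, zero_add,
    add_comm]

theorem aeval_mul (h : IsLadder y r l w) (p q : S[X]) :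
    IsLadder y (aeval y p * r) (aeval y q * l) (p * q.comp (X + 1) * w) where
  raise_mul := by
    have hy : aeval y (X + 1 : S[X]) = y + 1 := by rw [map_add, aeval_X, map_one]
    have hcomm : aeval y p * (y + 1) = (y + 1) * aeval y p := by
      rw [← hy, ← map_mul, ← map_mul, mul_comm]
    rw [mul_assoc, h.raise_mul, ← mul_assoc, hcomm, mul_assoc]
  lower_mul := by
    have hy : aeval y (X - 1 : S[X]) = y - 1 := by rw [map_sub, aeval_X, map_one]
    have hcomm : aeval y q * (y - 1) = (y - 1) * aeval y q := by
      rw [← hy, ← map_mul, ← map_mul, mul_comm]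
    rw [mul_assoc, h.lower_mul, ← mul_assoc, hcomm, mul_assoc]
  raise_mul_lower := by
    rw [mul_assoc, ← mul_assoc r, h.raise_mul_aeval, mul_assoc, h.raise_mul_lower, map_mul,
      map_mul, mul_assoc]
  lower_mul_raise := by
    have hq : (q.comp (X + 1)).comp (X - 1) = q := by simp [comp_assoc]
    rw [mul_assoc, ← mul_assoc l, h.lower_mul_aeval, mul_assoc, h.lower_mul_raise, ← map_mul,
      ← map_mul, mul_comp, mul_comp, hq, mul_left_comm, mul_assoc]

end IsLadder

end Ladder

section RacahLadder

open Polynomial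

/-- The element `α = [A,D] + AC - BA` attached to four elements of a ring; `β` and `γ` are
`racahAlpha B C A D` and `racahAlpha C A B D`. -/
def racahAlpha {R : Type*} [Ring R] (A B C D : R) : R := A * D - D * A + A * C - B * A

/-- The value of `Ω_A` at parameters `a`, `b`, `c` and Casimir eigenvalue `s`. -/
def racahCasimirValue {S : Type*} [CommRing S] (a b c s : S) : S :=
  (s + a * (a + 1) - b * (b + 1) - c * (c + 1)) *
      (a * (a + 1) * s - b * (b + 1) * (c * (c + 1)))
    - (s + a * (a + 1)) * (b * (b + 1) + c * (c + 1))

/-- The expression `Ω_A` attached to four elements of a ring that is also a vector space over `K`;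
`Ω_B` and `Ω_C` are `racahOmega K B C A D` and `racahOmega K C A B D`. -/
def racahOmega (K : Type*) {R : Type*} [DivisionRing K] [Ring R] [Module K R] (A B C D : R) : R :=
  D ^ 2 + (2 : K)⁻¹ • (B * A * C + C * A * B) + A ^ 2 + B * racahAlpha C A B D
    - C * racahAlpha B C A D - A * (A + B + C)

variable {S R : Type*} [CommRing S] [Ring R] [Algebra S R]

/-- The weight `(X + c + a - b + 1)(b + c - a - X)(s - X² - X)` of the ladder in which `A♮` and
`B♮` have degrees at most one. -/
def racahWeight (a b c s : S) : S[X] :=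
  (X + Polynomial.C (c + a - b + 1)) * (Polynomial.C (b + c - a) - X) *
    (Polynomial.C s - X ^ 2 - X)

/-- The expression `ϑ(ϑ + 1) + r` for `A♮`, where `ϑ = y + a`. -/
def ladderA (y r l : R) (a : S) : R :=
  ladderSum y r l 0 1 ((X + Polynomial.C a) * (X + Polynomial.C a + 1)) 0 0

/-- The expression `θ(θ - 1) + l` for `B♮`, where `θ = y - b`. -/
def ladderB (y r l : R) (b : S) : R :=
  ladderSum y r l 0 0 ((X - Polynomial.C b) * (X - Polynomial.C b - 1)) 1 0

/-- The expression for `C♮` obtained by subtracting `A♮` and `B♮` from the central element `δ`. -/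
def ladderC (y r l : R) (a b c s : S) : R :=
  ladderSum y r l 0 (-1)
    (Polynomial.C (a * (a + 1) + b * (b + 1) + c * (c + 1) + s)
      - (X + Polynomial.C a) * (X + Polynomial.C a + 1)
      - (X - Polynomial.C b) * (X - Polynomial.C b - 1)) (-1) 0

/-- The expression for `D♮`: its components of degree `1` and `-1` are `θr` and `ϑl`, and twice its
component of degree `0` is `rl - lr`. -/
def ladderD (y r l : R) (a b c s : S) : R :=
  ladderSum y r l 0 (X - Polynomial.C b)
    ((Polynomial.C (b - a) - X) * Polynomial.C s + 2 * X ^ 3 + Polynomial.C (3 * (a - b)) * X ^ 2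
      - Polynomial.C (c ^ 2 - (a - b) ^ 2 + c) * X) (X + Polynomial.C a) 0

namespace IsLadder

variable {y r l : R} {a b c s : S}

theorem racahAlpha_eq (h : IsLadder y r l (racahWeight a b c s)) :
    racahAlpha (ladderA y r l a) (ladderB y r l b) (ladderC y r l a b c s)
        (ladderD y r l a b c s) =
      algebraMap S R ((c * (c + 1) - b * (b + 1)) * (a * (a + 1) - s)) := by
  rw [algebraMap_eq_ladderSum y r l]
  simp only [racahAlpha, ladderA, ladderB, ladderC, ladderD, h.ladderSum_mul, ladderSum_add,
    ladderSum_sub, racahWeight]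
  congr 1 <;>
    simp only [add_comp, sub_comp, mul_comp, neg_comp, pow_comp, ofNat_comp, C_comp, X_comp,
      zero_comp, one_comp, map_add, map_sub, map_mul, map_pow, map_one, map_ofNat] <;> ring

-- This is `Ω_A = racahCasimirValue` solved for its cubic terms, doubled since `2` need not be
-- invertible in `S`. The cubic terms are bracketed so that `BA` and `AB`, which only have degrees
-- between `-1` and `1`, are multiplied out first.
theorem racah_cubic_eq (h : IsLadder y r l (racahWeight a b c s)) :
    ladderB y r l b * ladderA y r l a * ladderC y r l a b c s
        + ladderC y r l a b c s * (ladderA y r l a * ladderB y r l b) =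
      2 * (algebraMap S R (racahCasimirValue a b c s)
        - ladderD y r l a b c s * ladderD y r l a b c s - ladderA y r l a * ladderA y r l a
        - ladderB y r l b * algebraMap S R ((b * (b + 1) - a * (a + 1)) * (c * (c + 1) - s))
        + ladderC y r l a b c s * algebraMap S R ((a * (a + 1) - c * (c + 1)) * (b * (b + 1) - s))
        + ladderA y r l a * algebraMap S R (a * (a + 1) + b * (b + 1) + c * (c + 1) + s)) := by
  simp only [algebraMap_eq_ladderSum y r l, two_mul, ladderA, ladderB, ladderC, ladderD,
    h.raise_add_mul_lower_add, h.lower_add_mul_raise_add]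
  simp only [h.ladderSum_mul, ladderSum_add, ladderSum_sub, racahWeight, racahCasimirValue]
  congr 1 <;>
    simp only [add_comp, sub_comp, mul_comp, neg_comp, pow_comp, ofNat_comp, C_comp, X_comp,
      zero_comp, one_comp, map_add, map_sub, map_mul, map_pow, map_one, map_ofNat] <;> ring

end IsLadder

end RacahLadder

section Equitable

variable {R : Type*} [Ring R]

/-- The relations of the equitable presentation of `U(sl₂)`. -/
structure IsEquitable (x y z : R) : Prop where
  xy : x * y - y * x = x + y
  yz : y * z - z * y = y + z
  zx : z * x - x * z = z + x

/-- The normalized Casimir element in equitable generators. It agrees with the symmetric expression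
`-(xy + yz + zx + yx + zy + xz)/2` but needs no division by two. -/
def equitableCasimir (x y z : R) : R := x + y + z - (x * y + y * z + z * x)

theorem equitableCasimir_rotate (x y z : R) :
    equitableCasimir y z x = equitableCasimir x y z := by
  simp only [equitableCasimir]
  abel

namespace IsEquitable

variable {x y z : R}

theorem rotate (h : IsEquitable x y z) : IsEquitable y z x := ⟨h.yz, h.zx, h.xy⟩

theorem map {R' : Type*} [Ring R'] (h : IsEquitable x y z) (φ : R →+* R') :
    IsEquitable (φ x) (φ y) (φ z) where
  xy := by simp only [← map_mul, ← map_sub, ← map_add, h.xy]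
  yz := by simp only [← map_mul, ← map_sub, ← map_add, h.yz]
  zx := by simp only [← map_mul, ← map_sub, ← map_add, h.zx]

theorem neg_add_mul_self (h : IsEquitable x y z) : -(x + y) * y = (y + 1) * -(x + y) := by
  have : x * y = y * x + (x + y) := by rw [← h.xy]; abel
  simp only [neg_mul, add_mul, mul_neg, mul_add, one_mul, this]
  abel

theorem add_mul_self (h : IsEquitable x y z) : (y + z) * y = (y - 1) * (y + z) := by
  have : z * y = y * z - (y + z) := by rw [← h.yz]; abel
  simp only [add_mul, sub_mul, mul_add, one_mul, this]
  abel

theorem neg_add_mul_add (h : IsEquitable x y z) :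
    -(x + y) * (y + z) = equitableCasimir x y z - y * y - y := by
  have : z * x = x * z + (z + x) := by rw [← h.zx]; abel
  simp only [equitableCasimir, this]
  noncomm_ring

theorem add_mul_neg_add (h : IsEquitable x y z) :
    (y + z) * -(x + y) = equitableCasimir x y z - y * y + y := by
  have hxy : x * y = y * x + (x + y) := by rw [← h.xy]; abel
  have hyz : y * z = z * y + (y + z) := by rw [← h.yz]; abel
  simp only [equitableCasimir, hxy, hyz]
  noncomm_ring

theorem commute_casimir (h : IsEquitable x y z) : Commute y (equitableCasimir x y z) := by
  have hcas : equitableCasimir x y z = -(x + y) * (y + z) + y * y + y := by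
    rw [h.neg_add_mul_add]; abel
  have hprod : Commute y (-(x + y) * (y + z)) := by
    rw [Commute.symm_iff, commute_iff_eq, mul_assoc, h.add_mul_self, sub_mul, one_mul, mul_sub,
      ← mul_assoc, h.neg_add_mul_self]
    noncomm_ring
  have hself := Commute.refl y
  rw [hcas]
  exact (hprod.add_right (hself.mul_right hself)).add_right hself

end IsEquitable

section Sl2

variable {K : Type*} [Field K] [Algebra K R] {e f h : R}

theorem isEquitable_of_sl2 (hK : (2 : K) ≠ 0) (he : h * e - e * h = 2 * e)
    (hf : h * f - f * h = -(2 * f)) (hef : e * f - f * e = h) :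
    IsEquitable (-f - (2 : K)⁻¹ • h) ((2 : K)⁻¹ • h) (e - (2 : K)⁻¹ • h) := by
  obtain ⟨y, hy, rfl⟩ : ∃ y, y = (2 : K)⁻¹ • h ∧ y + y = h :=
    ⟨_, rfl, by rw [← two_smul K, smul_inv_smul₀ hK]⟩
  have two_mul_cancel {u v : R} (huv : 2 * u = 2 * v) : u = v := by
    simpa only [two_mul, ← two_smul K, smul_right_inj hK] using huv
  have hye : y * e - e * y = e := two_mul_cancel (by rw [← he]; noncomm_ring)
  have hyf : y * f - f * y = -f := two_mul_cancel (by rw [mul_neg, ← hf]; noncomm_ring)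
  rw [← hy]
  constructor
  · calc (-f - y) * y - y * (-f - y) = y * f - f * y := by noncomm_ring
      _ = -f - y + y := by rw [hyf]; abel
  · calc y * (e - y) - (e - y) * y = y * e - e * y := by noncomm_ring
      _ = y + (e - y) := by rw [hye]; abel
  · calc (e - y) * (-f - y) - (-f - y) * (e - y)
        = (y * f - f * y) - (e * f - f * e) + (y * e - e * y) := by noncomm_ring
      _ = e - y + (-f - y) := by rw [hyf, hef, hye]; abel

theorem equitableCasimir_of_sl2 (hK : (2 : K) ≠ 0) (he : h * e - e * h = 2 * e)
    (hf : h * f - f * h = -(2 * f)) (hef : e * f - f * e = h) :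
    equitableCasimir (-f - (2 : K)⁻¹ • h) ((2 : K)⁻¹ • h) (e - (2 : K)⁻¹ • h) =
      e * f + (4 : K)⁻¹ • (h * (h - 2)) := by
  have hprod := (isEquitable_of_sl2 hK he hf hef).add_mul_neg_add
  rw [add_sub_cancel, sub_add_cancel, neg_neg] at hprod
  have hfour : (4 : K)⁻¹ • (h * (h - 2)) =
      (2 : K)⁻¹ • h * (2 : K)⁻¹ • h - (2 : K)⁻¹ • h := by
    have four_eq : (4 : K) = 2 * 2 := by norm_num
    rw [mul_sub, mul_two, ← two_smul K h, smul_sub, smul_mul_smul_comm, four_eq, mul_inv,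
      mul_smul _ _ ((2 : K) • h), inv_smul_smul₀ hK]
  rw [hprod, hfour]
  abel

end Sl2

end Equitable

section RacahElements

open Polynomial

variable {S R : Type*} [CommRing S] [Ring R] [Algebra S R]

/-- The element `A♮` formed from arbitrary ring elements `x`, `y` and scalars `a`, `b`, `c`;
rotating the arguments gives `B♮` and `C♮`. -/
def racahElement (a b c : S) (x y : R) : R :=
  algebraMap S R (a * (a + 1)) + (b - c - a) • x + (a + b - c + 1) • y - x * y

/-- The element `D♮` formed from arbitrary ring elements `x`, `y`, `z` and scalars `a`, `b`, `c`. -/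
def racahCommutator (a b c : S) (x y z : R) : R :=
  z * y * x + z * x + (c + b * (c + a - b)) • x + (a + c * (a + b - c)) • y
    + (b + a * (b + c - a)) • z + (b - c) • (x * y) + (c - a) • (y * z) + (a - b) • (z * x)

/-- The component of degree one of `A♮` in the grading of `U(sl₂)` in which `y` has degree zero. -/
def racahRaise (a b c : S) (x y : R) : R := aeval y (X + Polynomial.C (c + a - b + 1)) * -(x + y)

/-- The component of degree minus one of `B♮` in the grading of `U(sl₂)` in which `y` has degree
zero. -/
def racahLower (a b c : S) (y z : R) : R := aeval y (Polynomial.C (b + c - a + 1) - X) * (y + z)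

theorem racahElement_add_add (a b c : S) (x y z : R) :
    racahElement a b c x y + racahElement b c a y z + racahElement c a b z x =
      algebraMap S R (a * (a + 1) + b * (b + 1) + c * (c + 1)) + equitableCasimir x y z := by
  simp only [racahElement, equitableCasimir, map_add]
  module

theorem racahElement_eq_ladderB (a b c : S) (x y z : R) :
    racahElement b c a y z = ladderB y (racahRaise a b c x y) (racahLower a b c y z) b := by
  simp only [racahElement, ladderB, racahLower, ladderSum, map_mul, map_add, aeval_X, aeval_C,
    map_one, map_sub, map_zero, Algebra.algebraMap_eq_smul_one, mul_add, add_mul, sub_mul, mul_sub,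
    smul_mul_assoc, one_mul, mul_smul_comm, mul_one, zero_mul]
  module

namespace IsEquitable

variable {x y z : R} {s : S} (a b c : S)

theorem racahCommutator_rotate (h : IsEquitable x y z) :
    racahCommutator b c a y z x = racahCommutator a b c x y z := by
  have hcubic : x * z * y + x * y = z * y * x + z * x := by
    have hz : z * x = x * z + (z + x) := by rw [← h.zx]; abel
    have hy : y * x = x * y - (x + y) := by rw [← h.xy]; abel
    rw [mul_assoc z y x, hy, mul_sub, ← mul_assoc, hz]
    simp only [add_mul, mul_add, hz]
    abel
  simp only [racahCommutator, hcubic]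
  module

theorem isLadder (h : IsEquitable x y z) (hs : equitableCasimir x y z = algebraMap S R s) :
    IsLadder y (-(x + y)) (y + z) (Polynomial.C s - X ^ 2 - X) where
  raise_mul := h.neg_add_mul_self
  lower_mul := h.add_mul_self
  raise_mul_lower := by
    rw [h.neg_add_mul_add, hs]
    simp only [map_sub, aeval_C, map_pow, aeval_X, ← sq]
  lower_mul_raise := by
    rw [h.add_mul_neg_add, hs]
    simp only [sub_comp, pow_comp, C_comp, X_comp, map_sub, aeval_C, map_pow, aeval_X, map_one]
    noncomm_ring

theorem isLadder_racah (h : IsEquitable x y z) (hs : equitableCasimir x y z = algebraMap S R s) :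
    IsLadder y (racahRaise a b c x y) (racahLower a b c y z) (racahWeight a b c s) := by
  have hweight : racahWeight a b c s =
      (X + Polynomial.C (c + a - b + 1)) * (Polynomial.C (b + c - a + 1) - X).comp (X + 1) *
        (Polynomial.C s - X ^ 2 - X) := by
    rw [racahWeight, sub_comp, C_comp, X_comp, C_add (a := b + c - a), C_1]
    ring
  rw [hweight]
  exact (h.isLadder hs).aeval_mul (X + Polynomial.C (c + a - b + 1))
    (Polynomial.C (b + c - a + 1) - X)

theorem racahElement_eq_ladderA (h : IsEquitable x y z) :
    racahElement a b c x y = ladderA y (racahRaise a b c x y) (racahLower a b c y z) a := by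
  have hxy : x * y = y * x + (x + y) := by rw [← h.xy]; abel
  simp only [racahElement, ladderA, racahRaise, ladderSum, hxy, map_mul, map_add, aeval_X, aeval_C,
    map_one, map_sub, map_zero, Algebra.algebraMap_eq_smul_one, mul_neg, mul_add, add_mul,
    sub_mul, smul_mul_assoc, one_mul, mul_smul_comm, mul_one, zero_mul]
  module

theorem racahElement_eq_ladderC (h : IsEquitable x y z)
    (hs : equitableCasimir x y z = algebraMap S R s) :
    racahElement c a b z x =
      ladderC y (racahRaise a b c x y) (racahLower a b c y z) a b c s := by
  have hsum := racahElement_add_add a b c x y z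
  rw [hs, ← map_add, h.racahElement_eq_ladderA, racahElement_eq_ladderB a b c x,
    algebraMap_eq_ladderSum y (racahRaise a b c x y) (racahLower a b c y z),
    ← eq_sub_iff_add_eq'] at hsum
  rw [hsum, ladderA, ladderB, ladderC, ladderSum_add, ladderSum_sub]
  congr 1 <;> ring

theorem racahCommutator_eq_ladderD (h : IsEquitable x y z)
    (hs : equitableCasimir x y z = algebraMap S R s) :
    racahCommutator a b c x y z =
      ladderD y (racahRaise a b c x y) (racahLower a b c y z) a b c s := by
  have hxy : x * y = y * x + (x + y) := by rw [← h.xy]; abel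
  have hzy : z * y = y * z - (y + z) := by rw [← h.yz]; abel
  have hzy_mul (t : R) : z * (y * t) = y * (z * t) - (y * t + z * t) := by
    rw [← mul_assoc, hzy]
    simp only [add_mul, sub_mul, mul_assoc]
  simp only [racahCommutator, ladderD, racahRaise, racahLower, ladderSum, map_mul (aeval y),
    map_add, map_pow, aeval_X, aeval_C, map_one, map_sub, map_ofNat, ← hs, equitableCasimir]
  simp only [pow_succ, pow_zero, mul_assoc, two_mul, map_zero, Algebra.algebraMap_eq_smul_one,
    mul_add, add_mul, sub_mul, mul_sub, mul_neg, smul_mul_assoc, one_mul, mul_smul_comm, mul_one,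
    zero_mul, hxy, hzy, hzy_mul]
  module

theorem racahAlpha_eq (h : IsEquitable x y z) (hs : equitableCasimir x y z = algebraMap S R s) :
    racahAlpha (racahElement a b c x y) (racahElement b c a y z) (racahElement c a b z x)
        (racahCommutator a b c x y z) =
      algebraMap S R ((c * (c + 1) - b * (b + 1)) * (a * (a + 1) - s)) := by
  rw [h.racahElement_eq_ladderA, racahElement_eq_ladderB a b c x,
    h.racahElement_eq_ladderC a b c hs, h.racahCommutator_eq_ladderD a b c hs,
    (h.isLadder_racah a b c hs).racahAlpha_eq]

theorem racahBeta_eq (h : IsEquitable x y z) (hs : equitableCasimir x y z = algebraMap S R s) :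
    racahAlpha (racahElement b c a y z) (racahElement c a b z x) (racahElement a b c x y)
        (racahCommutator a b c x y z) =
      algebraMap S R ((a * (a + 1) - c * (c + 1)) * (b * (b + 1) - s)) := by
  rw [← h.racahCommutator_rotate]
  exact h.rotate.racahAlpha_eq b c a ((equitableCasimir_rotate x y z).trans hs)

theorem racahGamma_eq (h : IsEquitable x y z) (hs : equitableCasimir x y z = algebraMap S R s) :
    racahAlpha (racahElement c a b z x) (racahElement a b c x y) (racahElement b c a y z)
        (racahCommutator a b c x y z) =
      algebraMap S R ((b * (b + 1) - a * (a + 1)) * (c * (c + 1) - s)) := by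
  rw [← h.racahCommutator_rotate]
  exact h.rotate.racahBeta_eq b c a ((equitableCasimir_rotate x y z).trans hs)

theorem racahOmega_eq (h : IsEquitable x y z) (hs : equitableCasimir x y z = algebraMap S R s)
    {K : Type*} [DivisionRing K] [Module K R] (hK : (2 : K) ≠ 0) :
    racahOmega K (racahElement a b c x y) (racahElement b c a y z) (racahElement c a b z x)
        (racahCommutator a b c x y z) =
      algebraMap S R (racahCasimirValue a b c s) := by
  have hcubic := (h.isLadder_racah a b c hs).racah_cubic_eq
  rw [← h.racahElement_eq_ladderA, ← racahElement_eq_ladderB a b c x,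
    ← h.racahElement_eq_ladderC a b c hs, ← h.racahCommutator_eq_ladderD a b c hs, ← mul_assoc,
    two_mul, ← two_smul K] at hcubic
  have hδ := racahElement_add_add a b c x y z
  rw [hs, ← map_add] at hδ
  rw [racahOmega, hcubic, inv_smul_smul₀ hK, h.racahBeta_eq a b c hs, h.racahGamma_eq a b c hs, hδ,
    sq, sq]
  abel

end IsEquitable

end RacahElements

section EnvelopingAlgebra

theorem h_mul_e_sub : h F * e F - e F * h F = 2 * e F := by
  have := RingQuot.mkAlgHom_rel F (slRel.he (F := F))
  simpa only [map_sub, map_mul, map_ofNat, e, h] using this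

theorem h_mul_f_sub : h F * f F - f F * h F = -(2 * f F) := by
  have := RingQuot.mkAlgHom_rel F (slRel.hf (F := F))
  simpa only [map_sub, map_mul, map_neg, map_ofNat, f, h] using this

theorem e_mul_f_sub : e F * f F - f F * e F = h F := by
  have := RingQuot.mkAlgHom_rel F (slRel.ef (F := F))
  simpa only [map_sub, map_mul, e, f, h] using this

variable {F}

theorem mem_center_of_commute_generators {u : U F} (he : Commute (e F) u) (hf : Commute (f F) u)
    (hh : Commute (h F) u) : u ∈ Subring.center (U F) := by
  rw [Subring.mem_center_iff]
  intro g
  obtain ⟨w, rfl⟩ := RingQuot.mkAlgHom_surjective F (slRel F) g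
  change Commute _ u
  induction w using FreeAlgebra.induction with
  | grade0 k => simpa only [AlgHom.commutes] using Algebra.commute_algebraMap_left k u
  | grade1 i => fin_cases i <;> assumption
  | mul v w hv hw => simpa only [map_mul] using hv.mul_left hw
  | add v w hv hw => simpa only [map_add] using hv.add_left hw

theorem neg_ux_add_uy : -(ux F + uy F) = f F := by
  rw [ux, uy]
  abel

theorem uy_add_uz : uy F + uz F = e F := by
  rw [uz, uy]
  abel

theorem uy_add_uy (hchar : (2 : F) ≠ 0) : uy F + uy F = h F := by
  rw [uy, ← two_smul F, smul_inv_smul₀ hchar]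

theorem isEquitable_ux_uy_uz (hchar : (2 : F) ≠ 0) : IsEquitable (ux F) (uy F) (uz F) :=
  isEquitable_of_sl2 hchar (h_mul_e_sub F) (h_mul_f_sub F) (e_mul_f_sub F)

theorem equitableCasimir_ux_uy_uz (hchar : (2 : F) ≠ 0) :
    equitableCasimir (ux F) (uy F) (uz F) = Lam F :=
  equitableCasimir_of_sl2 hchar (h_mul_e_sub F) (h_mul_f_sub F) (e_mul_f_sub F)

theorem Lam_mem_center (hchar : (2 : F) ≠ 0) : Lam F ∈ Subring.center (U F) := by
  have heq := isEquitable_ux_uy_uz hchar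
  rw [← equitableCasimir_ux_uy_uz hchar]
  have hx := heq.rotate.rotate.commute_casimir
  have hy := heq.commute_casimir
  have hz := heq.rotate.commute_casimir
  rw [equitableCasimir_rotate, equitableCasimir_rotate] at hx
  rw [equitableCasimir_rotate] at hz
  refine mem_center_of_commute_generators ?_ ?_ ?_
  · rw [← uy_add_uz]
    exact hy.add_left hz
  · rw [← neg_ux_add_uy]
    exact (hx.add_left hy).neg_left
  · rw [← uy_add_uy hchar]
    exact hy.add_left hy

end EnvelopingAlgebra

section RacahAlgebra

variable {F} {R : Type*} [Ring R] [Algebra F R] (φ : Racah F →ₐ[F] R)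

theorem map_OmegaA : φ (OmegaA F) = racahOmega F (φ (A F)) (φ (B F)) (φ (C F)) (φ (D F)) := by
  simp only [OmegaA, beta, gamma, delta, racahOmega, racahAlpha, map_add, map_sub, map_mul,
    map_pow, map_smul]

theorem map_OmegaB : φ (OmegaB F) = racahOmega F (φ (B F)) (φ (C F)) (φ (A F)) (φ (D F)) := by
  simp only [OmegaB, alpha, gamma, delta, racahOmega, racahAlpha, map_add, map_sub, map_mul,
    map_pow, map_smul]
  rw [add_rotate (φ (A F))]

theorem map_OmegaC : φ (OmegaC F) = racahOmega F (φ (C F)) (φ (A F)) (φ (B F)) (φ (D F)) := by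
  simp only [OmegaC, alpha, beta, delta, racahOmega, racahAlpha, map_add, map_sub, map_mul,
    map_pow, map_smul]
  rw [← add_rotate (φ (C F))]

end RacahAlgebra

section TensorProduct

variable {K P U : Type*} [CommRing P] [Ring U]

section CommRing

variable [CommRing K] [Algebra K P] [Algebra K U]

theorem tmul_one_mem_center (p : P) : p ⊗ₜ[K] (1 : U) ∈ Subring.center (P ⊗[K] U) := by
  rw [Subring.mem_center_iff]
  intro t
  induction t with
  | zero => simp only [zero_mul, mul_zero]
  | tmul q u => simp only [Algebra.TensorProduct.tmul_mul_tmul, mul_comm, mul_one, one_mul]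
  | add t t' ht ht' => rw [add_mul, mul_add, ht, ht']

theorem one_tmul_mem_center {u : U} (hu : u ∈ Subring.center U) :
    (1 : P) ⊗ₜ[K] u ∈ Subring.center (P ⊗[K] U) := by
  rw [Subring.mem_center_iff] at hu ⊢
  intro t
  induction t with
  | zero => simp only [zero_mul, mul_zero]
  | tmul q v => simp only [Algebra.TensorProduct.tmul_mul_tmul, mul_one, one_mul, hu]
  | add t t' ht ht' => rw [add_mul, mul_add, ht, ht']

variable (K P U) in
/-- The inclusion `p ↦ p ⊗ 1` of a commutative algebra `P` in the centre of `P ⊗ U`. -/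
def tensorCenter : P →+* Subring.center (P ⊗[K] U) :=
  (Algebra.TensorProduct.includeLeftRingHom (R := K) (A := P) (B := U)).codRestrict _
    tmul_one_mem_center

theorem algebraMap_tensorCenter (p : P) :
    algebraMap (Subring.center (P ⊗[K] U)) (P ⊗[K] U) (tensorCenter K P U p) = p ⊗ₜ 1 :=
  rfl

theorem tensorCenter_smul_one_tmul (p : P) (u : U) :
    tensorCenter K P U p • (1 : P) ⊗ₜ[K] u = p ⊗ₜ u := by
  rw [Algebra.smul_def, algebraMap_tensorCenter, Algebra.TensorProduct.tmul_mul_tmul, mul_one,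
    one_mul]

theorem racahElement_tensorCenter (a b c : P) (x y : U) :
    racahElement (tensorCenter K P U a) (tensorCenter K P U b) (tensorCenter K P U c)
        ((1 : P) ⊗ₜ[K] x) (1 ⊗ₜ y) =
      (a * (a + 1)) ⊗ₜ 1 + (b - c - a) ⊗ₜ x + (a + b - c + 1) ⊗ₜ y - 1 ⊗ₜ (x * y) := by
  simp only [racahElement, ← map_mul, ← map_add, ← map_sub, ← map_one (tensorCenter K P U),
    tensorCenter_smul_one_tmul, algebraMap_tensorCenter, Algebra.TensorProduct.tmul_mul_tmul,
    mul_one]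

theorem racahCommutator_tensorCenter (a b c : P) (x y z : U) :
    racahCommutator (tensorCenter K P U a) (tensorCenter K P U b) (tensorCenter K P U c)
        ((1 : P) ⊗ₜ[K] x) (1 ⊗ₜ y) (1 ⊗ₜ z) =
      1 ⊗ₜ (z * y * x + z * x) + (c + b * (c + a - b)) ⊗ₜ x + (a + c * (a + b - c)) ⊗ₜ y
        + (b + a * (b + c - a)) ⊗ₜ z + (b - c) ⊗ₜ (x * y) + (c - a) ⊗ₜ (y * z)
        + (a - b) ⊗ₜ (z * x) := by
  simp only [racahCommutator, ← map_mul, ← map_add, ← map_sub, TensorProduct.tmul_add,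
    tensorCenter_smul_one_tmul, Algebra.TensorProduct.tmul_mul_tmul, mul_one]

theorem algebraMap_racahCasimirValue_tensorCenter (a b c : P) {Λ : U} (hΛ : Λ ∈ Subring.center U) :
    algebraMap (Subring.center (P ⊗[K] U)) (P ⊗[K] U)
        (racahCasimirValue (tensorCenter K P U a) (tensorCenter K P U b) (tensorCenter K P U c)
          ⟨1 ⊗ₜ Λ, one_tmul_mem_center hΛ⟩) =
      (1 ⊗ₜ Λ + (a * (a + 1)) ⊗ₜ 1 - (b * (b + 1)) ⊗ₜ 1 - (c * (c + 1)) ⊗ₜ 1) *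
          ((a * (a + 1)) ⊗ₜ Λ - (b * (b + 1) * (c * (c + 1))) ⊗ₜ 1)
        - (1 ⊗ₜ Λ + (a * (a + 1)) ⊗ₜ 1) * ((b * (b + 1)) ⊗ₜ 1 + (c * (c + 1)) ⊗ₜ 1) := by
  rw [← tensorCenter_smul_one_tmul (a * (a + 1)) Λ, Algebra.smul_def]
  simp only [racahCasimirValue, ← algebraMap_tensorCenter, map_sub, map_add, map_mul, map_one]
  rfl

end CommRing

theorem racahOmega_tensorCenter [Field K] [Algebra K P] [Algebra K U] (hK : (2 : K) ≠ 0)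
    {x y z Λ : U} (h : IsEquitable x y z) (hcas : equitableCasimir x y z = Λ)
    (hΛ : Λ ∈ Subring.center U) (a b c : P) :
    racahOmega K
        (racahElement (tensorCenter K P U a) (tensorCenter K P U b) (tensorCenter K P U c)
          ((1 : P) ⊗ₜ[K] x) (1 ⊗ₜ y))
        (racahElement (tensorCenter K P U b) (tensorCenter K P U c) (tensorCenter K P U a)
          (1 ⊗ₜ y) (1 ⊗ₜ z))
        (racahElement (tensorCenter K P U c) (tensorCenter K P U a) (tensorCenter K P U b)
          (1 ⊗ₜ z) (1 ⊗ₜ x))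
        (racahCommutator (tensorCenter K P U a) (tensorCenter K P U b) (tensorCenter K P U c)
          (1 ⊗ₜ x) (1 ⊗ₜ y) (1 ⊗ₜ z)) =
      (1 ⊗ₜ Λ + (a * (a + 1)) ⊗ₜ 1 - (b * (b + 1)) ⊗ₜ 1 - (c * (c + 1)) ⊗ₜ 1) *
          ((a * (a + 1)) ⊗ₜ Λ - (b * (b + 1) * (c * (c + 1))) ⊗ₜ 1)
        - (1 ⊗ₜ Λ + (a * (a + 1)) ⊗ₜ 1) * ((b * (b + 1)) ⊗ₜ 1 + (c * (c + 1)) ⊗ₜ 1) := by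
  have htensor : IsEquitable ((1 : P) ⊗ₜ[K] x) (1 ⊗ₜ y) (1 ⊗ₜ z) :=
    h.map (Algebra.TensorProduct.includeRight : U →ₐ[K] P ⊗[K] U).toRingHom
  have hcas_tensor : equitableCasimir ((1 : P) ⊗ₜ[K] x) (1 ⊗ₜ y) (1 ⊗ₜ z) = 1 ⊗ₜ Λ := by
    simp only [← hcas, equitableCasimir, Algebra.TensorProduct.tmul_mul_tmul, mul_one,
      TensorProduct.tmul_add, TensorProduct.tmul_sub]
  rw [← algebraMap_racahCasimirValue_tensorCenter a b c hΛ]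
  exact htensor.racahOmega_eq _ _ _ hcas_tensor hK

end TensorProduct

theorem Anat_eq_racahElement :
    Anat F =
      racahElement (tensorCenter F (P F) (U F) (pa F)) (tensorCenter F (P F) (U F) (pb F))
        (tensorCenter F (P F) (U F) (pc F)) (1 ⊗ₜ ux F) (1 ⊗ₜ uy F) :=
  (racahElement_tensorCenter _ _ _ _ _).symm

theorem Bnat_eq_racahElement :
    Bnat F =
      racahElement (tensorCenter F (P F) (U F) (pb F)) (tensorCenter F (P F) (U F) (pc F))
        (tensorCenter F (P F) (U F) (pa F)) (1 ⊗ₜ uy F) (1 ⊗ₜ uz F) :=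
  (racahElement_tensorCenter _ _ _ _ _).symm

theorem Cnat_eq_racahElement :
    Cnat F =
      racahElement (tensorCenter F (P F) (U F) (pc F)) (tensorCenter F (P F) (U F) (pa F))
        (tensorCenter F (P F) (U F) (pb F)) (1 ⊗ₜ uz F) (1 ⊗ₜ ux F) :=
  (racahElement_tensorCenter _ _ _ _ _).symm

theorem Dnat_eq_racahCommutator :
    Dnat F =
      racahCommutator (tensorCenter F (P F) (U F) (pa F)) (tensorCenter F (P F) (U F) (pb F))
        (tensorCenter F (P F) (U F) (pc F)) (1 ⊗ₜ ux F) (1 ⊗ₜ uy F) (1 ⊗ₜ uz F) :=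
  (racahCommutator_tensorCenter _ _ _ _ _ _).symm

theorem statement2 (hchar : (2 : F) ≠ 0) (φ : Racah F →ₐ[F] T F)
    (hA : φ (A F) = Anat F) (hB : φ (B F) = Bnat F)
    (hC : φ (C F) = Cnat F) (hD : φ (D F) = Dnat F) :
    φ (OmegaA F) =
      ((1 : P F) ⊗ₜ[F] Lam F + (pa F * (pa F + 1)) ⊗ₜ[F] (1 : U F)
          - (pb F * (pb F + 1)) ⊗ₜ[F] (1 : U F) - (pc F * (pc F + 1)) ⊗ₜ[F] (1 : U F)) *
        ((pa F * (pa F + 1)) ⊗ₜ[F] Lam F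
          - (pb F * (pb F + 1) * (pc F * (pc F + 1))) ⊗ₜ[F] (1 : U F))
      - ((1 : P F) ⊗ₜ[F] Lam F + (pa F * (pa F + 1)) ⊗ₜ[F] (1 : U F)) *
        ((pb F * (pb F + 1)) ⊗ₜ[F] (1 : U F) + (pc F * (pc F + 1)) ⊗ₜ[F] (1 : U F)) ∧
    φ (OmegaB F) =
      ((1 : P F) ⊗ₜ[F] Lam F + (pb F * (pb F + 1)) ⊗ₜ[F] (1 : U F)
          - (pc F * (pc F + 1)) ⊗ₜ[F] (1 : U F) - (pa F * (pa F + 1)) ⊗ₜ[F] (1 : U F)) *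
        ((pb F * (pb F + 1)) ⊗ₜ[F] Lam F
          - (pc F * (pc F + 1) * (pa F * (pa F + 1))) ⊗ₜ[F] (1 : U F))
      - ((1 : P F) ⊗ₜ[F] Lam F + (pb F * (pb F + 1)) ⊗ₜ[F] (1 : U F)) *
        ((pc F * (pc F + 1)) ⊗ₜ[F] (1 : U F) + (pa F * (pa F + 1)) ⊗ₜ[F] (1 : U F)) ∧
    φ (OmegaC F) =
      ((1 : P F) ⊗ₜ[F] Lam F + (pc F * (pc F + 1)) ⊗ₜ[F] (1 : U F)
          - (pa F * (pa F + 1)) ⊗ₜ[F] (1 : U F) - (pb F * (pb F + 1)) ⊗ₜ[F] (1 : U F)) *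
        ((pc F * (pc F + 1)) ⊗ₜ[F] Lam F
          - (pa F * (pa F + 1) * (pb F * (pb F + 1))) ⊗ₜ[F] (1 : U F))
      - ((1 : P F) ⊗ₜ[F] Lam F + (pc F * (pc F + 1)) ⊗ₜ[F] (1 : U F)) *
        ((pa F * (pa F + 1)) ⊗ₜ[F] (1 : U F) + (pb F * (pb F + 1)) ⊗ₜ[F] (1 : U F)) := by
  have hxyz := isEquitable_ux_uy_uz hchar
  have hcas := equitableCasimir_ux_uy_uz hchar
  have hcenter := Lam_mem_center hchar
  have htensor : IsEquitable ((1 : P F) ⊗ₜ[F] ux F) (1 ⊗ₜ uy F) (1 ⊗ₜ uz F) :=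
    hxyz.map (Algebra.TensorProduct.includeRight : U F →ₐ[F] T F).toRingHom
  rw [map_OmegaA, map_OmegaB, map_OmegaC, hA, hB, hC, hD, Anat_eq_racahElement,
    Bnat_eq_racahElement, Cnat_eq_racahElement, Dnat_eq_racahCommutator]
  refine ⟨racahOmega_tensorCenter hchar hxyz hcas hcenter _ _ _, ?_, ?_⟩
  · rw [← htensor.racahCommutator_rotate]
    exact racahOmega_tensorCenter hchar hxyz.rotate ((equitableCasimir_rotate _ _ _).trans hcas)
      hcenter _ _ _
  · rw [← htensor.racahCommutator_rotate, ← htensor.rotate.racahCommutator_rotate]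
    exact racahOmega_tensorCenter hchar hxyz.rotate.rotate
      ((equitableCasimir_rotate _ _ _).trans ((equitableCasimir_rotate _ _ _).trans hcas))
      hcenter _ _ _

end RacahPaper
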